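/- Let V be an n-dimensional complex vector space with a nondegenerate Hermitian form ω of signature (p, n−p), let k ≤ n, and set l = min{p, n−p}. The number of orbits of SU(V, ω) on the Grassmannian Gr(k, V) equals (n−k+1)(n−k+2)/2 if n−l ≤ k, equals (l+1)(l+2)/2 if l ≤ k ≤ n−l, and equals (k+1)(k+2)/2 if k ≤ l. -/

import Mathlib

open Module Submodule

noncomputable section

variable {V : Type} [AddCommGroup V] [Module ℂ V]

/-- A sesquilinear form is Hermitian. -/
def IsHermitianForm (ω : V →ₗ⋆[ℂ] V →ₗ[ℂ] ℂ) : Prop :=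
  ∀ x y, ω x y = star (ω y x)

/-- Nondegeneracy of a sesquilinear form. -/
def IsNondeg (ω : V →ₗ⋆[ℂ] V →ₗ[ℂ] ℂ) : Prop :=
  ∀ x, (∀ y, ω x y = 0) → x = 0

/-- The orthogonal complement (in all of `V`) of a subspace with respect to `ω`. -/
def perp (ω : V →ₗ⋆[ℂ] V →ₗ[ℂ] ℂ) (U : Submodule ℂ V) : Submodule ℂ V where
  carrier := {v | ∀ u ∈ U, ω v u = 0}
  add_mem' := by
    intro a b ha hb u hu
    simp [ha u hu, hb u hu]
  zero_mem' := by
    intro u hu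
    simp
  smul_mem' := by
    intro c a ha u hu
    simp [LinearMap.map_smulₛₗ, ha u hu]

/-- `ω` is positive definite on the subspace `W`. -/
def PosDefOn (ω : V →ₗ⋆[ℂ] V →ₗ[ℂ] ℂ) (W : Submodule ℂ V) : Prop :=
  ∀ x ∈ W, x ≠ 0 → 0 < (ω x x).re

/-- `ω` is negative definite on the subspace `W`. -/
def NegDefOn (ω : V →ₗ⋆[ℂ] V →ₗ[ℂ] ℂ) (W : Submodule ℂ V) : Prop :=
  ∀ x ∈ W, x ≠ 0 → (ω x x).re < 0

/-- Signature `(a,b,c)` of `ω` restricted to `U`. -/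
def HasSignature (ω : V →ₗ⋆[ℂ] V →ₗ[ℂ] ℂ) (U : Submodule ℂ V) (a b c : ℕ) : Prop :=
  IsGreatest {d | ∃ W : Submodule ℂ V, W ≤ U ∧ PosDefOn ω W ∧ finrank ℂ W = d} a ∧
  IsGreatest {d | ∃ W : Submodule ℂ V, W ≤ U ∧ NegDefOn ω W ∧ finrank ℂ W = d} b ∧
  finrank ℂ (U ⊓ perp ω U : Submodule ℂ V) = c

/-- Two `k`-dimensional subspaces lie in the same orbit of `SU(V, ω)` (the group of
`ω`-isometries of determinant `1`). -/
def SameSUOrbit (ω : V →ₗ⋆[ℂ] V →ₗ[ℂ] ℂ) (k : ℕ)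
    (A B : {U : Submodule ℂ V // finrank ℂ U = k}) : Prop :=
  ∃ φ : V ≃ₗ[ℂ] V, (∀ x y, ω (φ x) (φ y) = ω x y) ∧
    LinearMap.det (φ : V →ₗ[ℂ] V) = 1 ∧
    Submodule.map (φ : V →ₗ[ℂ] V) A.1 = B.1

/-!
A subspace `U` of signature `(a, b, c)` has a basis in Sylvester normal form. Its `c` isotropic
vectors extend to hyperbolic pairs, so each of them is the sum of two orthogonal vectors of squares
`1` and `-1`, and the resulting family of `a + c` positive and `b + c` negative vectors extends to
an orthogonal basis of `V`. By Sylvester's law of inertia `a + c ≤ p` and `b + c ≤ q`, where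
`q = n - p`, and two subspaces of the same signature are exchanged by the isometry matching their
bases of `V`; a scalar of norm one corrects its determinant. Conversely every `(a, b, c)` with
`a + c ≤ p` and `b + c ≤ q` occurs, so the orbits are counted by the triples with
`a + b + c = k`. These amount to `a ≥ k - q` and `b ≥ k - p` (truncated subtraction) with
`a + b ≤ k`: a triangle of side `m + 1`, where `m = k - (k - p) - (k - q)`.
-/

variable {ω : V →ₗ⋆[ℂ] V →ₗ[ℂ] ℂ} {ι κ : Type*}

/-- The family `u` is orthogonal for `ω`, with real squares `ω (u i) (u i) = ε i`: its Gram matrix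
is the diagonal matrix with entries `ε`. -/
structure HasDiagGram (ω : V →ₗ⋆[ℂ] V →ₗ[ℂ] ℂ) (ε : ι → ℝ) (u : ι → V) : Prop where
  self : ∀ i, ω (u i) (u i) = ε i
  ortho : Pairwise fun i j => ω (u i) (u j) = 0

lemma IsHermitianForm.apply_eq_zero (hω : IsHermitianForm ω) {x y : V} (h : ω x y = 0) :
    ω y x = 0 := by
  rw [hω, h, star_zero]

lemma mem_perp_span_range {u : ι → V} {x : V} :
    x ∈ perp ω (span ℂ (Set.range u)) ↔ ∀ i, ω x (u i) = 0 := by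
  change span ℂ (Set.range u) ≤ LinearMap.ker (ω x) ↔ _
  simp [span_le, Set.range_subset_iff]

namespace HasDiagGram

variable {ε : ι → ℝ} {u : ι → V} {δ : κ → ℝ} {v : κ → V}

lemma comp (h : HasDiagGram ω ε u) {g : κ → ι} (hg : Function.Injective g) :
    HasDiagGram ω (ε ∘ g) (u ∘ g) :=
  ⟨fun i => h.self (g i), fun _ _ hij => h.ortho (hg.ne hij)⟩

lemma neg (h : HasDiagGram ω ε u) : HasDiagGram (-ω) (-ε) u :=
  ⟨fun i => by simp [h.self], fun i j hij => by simp [h.ortho hij]⟩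

lemma smul (h : HasDiagGram ω ε u) (c : ι → ℂ) :
    HasDiagGram ω (fun i => ‖c i‖ ^ 2 * ε i) fun i => c i • u i :=
  ⟨fun i => by simp [h.self, ← Complex.conj_mul', mul_assoc, mul_left_comm],
    fun i j hij => by simp [h.ortho hij]⟩

lemma sumElim (hω : IsHermitianForm ω) (hu : HasDiagGram ω ε u) (hv : HasDiagGram ω δ v)
    (h : ∀ i j, ω (u i) (v j) = 0) : HasDiagGram ω (Sum.elim ε δ) (Sum.elim u v) := by
  refine ⟨Sum.rec hu.self hv.self, ?_⟩
  rintro (i | i) (j | j) hij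
  · exact hu.ortho (by simpa using hij)
  · exact h i j
  · exact hω.apply_eq_zero (h j i)
  · exact hv.ortho (by simpa using hij)

lemma mem_perp_span_of_eq_zero (h : HasDiagGram ω ε u) {i : ι} (hi : ε i = 0) :
    u i ∈ perp ω (span ℂ (Set.range u)) := by
  refine mem_perp_span_range.mpr fun j => ?_
  obtain rfl | hij := eq_or_ne i j
  · simp [h.self, hi]
  · exact h.ortho hij

lemma ne_zero_of_span_eq_top (h : HasDiagGram ω ε u) (hnd : IsNondeg ω)
    (hu : span ℂ (Set.range u) = ⊤) {i : ι} (hi : u i ≠ 0) : ε i ≠ 0 := fun hε =>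
  hi (hnd (u i) fun y => h.mem_perp_span_of_eq_zero hε y (hu ▸ mem_top))

lemma linearIndependent (h : HasDiagGram ω ε u) (hε : ∀ i, ε i ≠ 0) : LinearIndependent ℂ u :=
  LinearMap.linearIndependent_of_isOrthoᵢ (B := ω) h.ortho fun i => by
    simpa [h.self] using hε i

variable [Fintype ι]

lemma apply_sum_right (h : HasDiagGram ω ε u) (i : ι) (d : ι → ℂ) :
    ω (u i) (∑ j, d j • u j) = d i * ε i := by
  rw [map_sum, Finset.sum_eq_single i (fun j _ hj => by simp [h.ortho hj.symm]) (by simp)]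
  simp [h.self]

lemma apply_sum_left (h : HasDiagGram ω ε u) (i : ι) (c : ι → ℂ) :
    ω (∑ j, c j • u j) (u i) = star (c i) * ε i := by
  rw [map_sum, LinearMap.sum_apply,
    Finset.sum_eq_single i (fun j _ hj => by simp [h.ortho hj]) (by simp)]
  simp [h.self]

lemma apply_sum_sum (h : HasDiagGram ω ε u) (c d : ι → ℂ) :
    ω (∑ i, c i • u i) (∑ j, d j • u j) = ∑ i, star (c i) * (ε i * d i) := by
  rw [map_sum ω, LinearMap.sum_apply]
  refine Finset.sum_congr rfl fun i _ => ?_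
  rw [LinearMap.map_smulₛₗ ω, LinearMap.smul_apply, h.apply_sum_right]
  simp [mul_comm]

lemma re_apply_sum_self (h : HasDiagGram ω ε u) (c : ι → ℂ) :
    (ω (∑ i, c i • u i) (∑ i, c i • u i)).re = ∑ i, ε i * Complex.normSq (c i) := by
  rw [h.apply_sum_sum, Complex.re_sum]
  refine Finset.sum_congr rfl fun i _ => ?_
  simp only [Complex.star_def, Complex.normSq_apply, Complex.mul_re, Complex.mul_im,
    Complex.conj_re, Complex.conj_im, Complex.ofReal_re, Complex.ofReal_im]
  ring

end HasDiagGram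

lemma HasDiagGram.span_sup_perp [Finite ι] {ε : ι → ℝ} {u : ι → V} (hω : IsHermitianForm ω)
    (h : HasDiagGram ω ε u) (hε : ∀ i, ε i ≠ 0) :
    span ℂ (Set.range u) ⊔ perp ω (span ℂ (Set.range u)) = ⊤ := by
  cases nonempty_fintype ι
  rw [eq_top_iff]
  intro x _
  refine mem_sup.mpr ⟨∑ i, (ω (u i) x / ε i) • u i, sum_mem fun i _ => ?_,
    x - ∑ i, (ω (u i) x / ε i) • u i, mem_perp_span_range.mpr fun i => hω.apply_eq_zero ?_,
    by simp⟩
  · exact smul_mem _ _ (subset_span ⟨i, rfl⟩)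
  · rw [map_sub, h.apply_sum_right, div_mul_cancel₀ _ (by exact_mod_cast hε i), sub_self]

/-- The Gram matrix of `ω` in any basis is Hermitian, so the spectral theorem diagonalizes it. -/
lemma IsHermitianForm.exists_basis_hasDiagGram [FiniteDimensional ℂ V] (hω : IsHermitianForm ω) :
    ∃ (ε : Fin (finrank ℂ V) → ℝ) (b : Basis (Fin (finrank ℂ V)) ℂ V), HasDiagGram ω ε b := by
  let c := finBasis ℂ V
  have hG : (LinearMap.toMatrix₂ c c ω).IsHermitian :=
    (LinearMap.isSymm_iff_isHermitian_toMatrix c).mp ⟨fun x y => (hω y x).symm⟩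
  let e := hG.eigenvectorBasis
  let b := e.toBasis.map ((WithLp.linearEquiv 2 ℂ _).trans c.equivFun.symm)
  have hgram (i j) : ω (b i) (b j) = hG.eigenvalues j * if i = j then 1 else 0 := calc
    ω (b i) (b j) = star (e i).ofLp ⬝ᵥ (LinearMap.toMatrix₂ c c ω).mulVec (e j).ofLp := by
      rw [star_dotProduct_toMatrix₂_mulVec]
      simp [b]
    _ = hG.eigenvalues j * inner ℂ (e i) (e j) := by
      rw [hG.mulVec_eigenvectorBasis, EuclideanSpace.inner_eq_star_dotProduct, dotProduct_smul,
        dotProduct_comm, Complex.real_smul]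
    _ = hG.eigenvalues j * if i = j then 1 else 0 := by
      rw [orthonormal_iff_ite.mp e.orthonormal]
  exact ⟨hG.eigenvalues, b, fun i => by simp [hgram], fun i j hij => by simp [hgram, hij]⟩

section SylvesterBasis

variable {A B C : Type*}

/-- The diagonal entries of a nondegenerate form in Sylvester normal form: `1` on `A` and `-1` on
`B`. -/
def pmSign : A ⊕ B → ℝ :=
  Sum.elim 1 (-1)

lemma pmSign_ne_zero (i : A ⊕ B) : pmSign i ≠ 0 := by
  rcases i with _ | _ <;> simp [pmSign]

/-- `u` is a basis of `U` in which the restriction of `ω` to `U` has Sylvester normal form: the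
diagonal entries are `1` on `A`, `-1` on `B` and `0` on `C`. -/
structure IsSylvesterBasis (ω : V →ₗ⋆[ℂ] V →ₗ[ℂ] ℂ) (U : Submodule ℂ V) (u : (A ⊕ B) ⊕ C → V) :
    Prop where
  hasDiagGram : HasDiagGram ω (Sum.elim pmSign 0) u
  linearIndependent : LinearIndependent ℂ u
  span_range : span ℂ (Set.range u) = U

end SylvesterBasis

lemma exists_normSq_mul_eq_sign (t : ℝ) : ∃ c : ℂ, c ≠ 0 ∧ ‖c‖ ^ 2 * t = SignType.sign t := by
  obtain rfl | ht := eq_or_ne t 0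
  · exact ⟨1, one_ne_zero, by simp⟩
  · have habs : 0 < |t| := abs_pos.mpr ht
    refine ⟨(√|t| : ℝ)⁻¹, by simp [habs.ne'], ?_⟩
    rw [norm_inv, Complex.norm_real, inv_pow, Real.norm_eq_abs, sq_abs, Real.sq_sqrt habs.le]
    nth_rewrite 2 [← abs_mul_sign t]
    rw [inv_mul_cancel_left₀ habs.ne']

lemma exists_equiv_fin_sum_signs [Finite ι] (s : ι → SignType) :
    ∃ (a b c : ℕ) (e : (Fin a ⊕ Fin b) ⊕ Fin c ≃ ι),
      ∀ i, s (e i) = Sum.elim (Sum.elim (fun _ => 1) fun _ => -1) (fun _ => 0) i := by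
  classical
  cases nonempty_fintype ι
  let t : (Fin (Fintype.card {i // s i = 1}) ⊕ Fin (Fintype.card {i // s i = -1})) ⊕
    Fin (Fintype.card {i // s i = 0}) → SignType :=
      Sum.elim (Sum.elim (fun _ => 1) fun _ => -1) fun _ => 0
  have hcard (σ : SignType) : Fintype.card {i // t i = σ} = Fintype.card {i // s i = σ} := by
    rw [Fintype.card_subtype (t · = σ), Finset.card_filter, Fintype.sum_sum_type,
      Fintype.sum_sum_type]
    cases σ <;> simp [t]
  exact ⟨_, _, _, Equiv.ofFiberEquiv fun σ => Fintype.equivOfCardEq (hcard σ),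
    Equiv.ofFiberEquiv_map _⟩

lemma IsHermitianForm.exists_isSylvesterBasis [FiniteDimensional ℂ V] (hω : IsHermitianForm ω)
    (U : Submodule ℂ V) :
    ∃ (a b c : ℕ) (u : (Fin a ⊕ Fin b) ⊕ Fin c → V), IsSylvesterBasis ω U u := by
  have hωU : IsHermitianForm (ω.domRestrict₁₂ U U) := fun x y => hω x y
  obtain ⟨ε, v, hv⟩ := hωU.exists_basis_hasDiagGram
  choose r hr hrε using fun i => exists_normSq_mul_eq_sign (ε i)
  obtain ⟨a, b, c, e, he⟩ := exists_equiv_fin_sum_signs fun i => SignType.sign (ε i)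
  let w := (v.isUnitSMul fun i => (hr i).isUnit).reindex e.symm
  have hw : HasDiagGram (ω.domRestrict₁₂ U U) (Sum.elim pmSign 0) w := by
    convert (hv.smul r).comp e.injective using 1
    · funext i
      rw [Function.comp_apply, hrε, he]
      rcases i with (_ | _) | _ <;> simp [pmSign]
    · funext i
      simp [w, Basis.isUnitSMul_apply]
  refine ⟨a, b, c, U.subtype ∘ w, ⟨fun i => hw.self i, fun i j hij => hw.ortho hij⟩,
    w.linearIndependent.map' _ U.ker_subtype, ?_⟩
  rw [Set.range_comp, span_image, w.span_eq, Submodule.map_top, range_subtype]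

/-! ### Sylvester's law of inertia -/

lemma negDefOn_iff_posDefOn_neg {W : Submodule ℂ V} : NegDefOn ω W ↔ PosDefOn (-ω) W := by
  simp [NegDefOn, PosDefOn]

namespace HasDiagGram

variable [Finite ι] {ε : ι → ℝ} {u : ι → V}

lemma posDefOn_span (h : HasDiagGram ω ε u) (hε : ∀ i, 0 < ε i) :
    PosDefOn ω (span ℂ (Set.range u)) := by
  cases nonempty_fintype ι
  intro x hx hx0
  obtain ⟨c, rfl⟩ := (mem_span_range_iff_exists_fun ℂ).mp hx
  obtain ⟨i, hi⟩ : ∃ i, c i ≠ 0 := by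
    by_contra! hc
    exact hx0 (Finset.sum_eq_zero fun i _ => by rw [hc, zero_smul])
  rw [h.re_apply_sum_self]
  exact Finset.sum_pos' (fun i _ => mul_nonneg (hε i).le (Complex.normSq_nonneg _))
    ⟨i, Finset.mem_univ i, mul_pos (hε i) (Complex.normSq_pos.mpr hi)⟩

lemma re_apply_self_nonpos (h : HasDiagGram ω ε u) (hε : ∀ i, ε i ≤ 0) {x : V}
    (hx : x ∈ span ℂ (Set.range u)) : (ω x x).re ≤ 0 := by
  cases nonempty_fintype ι
  obtain ⟨c, rfl⟩ := (mem_span_range_iff_exists_fun ℂ).mp hx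
  rw [h.re_apply_sum_self]
  exact Finset.sum_nonpos fun i _ =>
    mul_nonpos_of_nonpos_of_nonneg (hε i) (Complex.normSq_nonneg _)

/-- A positive definite subspace meets the span of the `u i` with `ε i ≤ 0` trivially. -/
lemma isGreatest_finrank_posDefOn (h : HasDiagGram ω ε u) (hu : LinearIndependent ℂ u) :
    IsGreatest {d | ∃ W ≤ span ℂ (Set.range u), PosDefOn ω W ∧ finrank ℂ W = d}
      (Nat.card {i // 0 < ε i}) := by
  classical
  cases nonempty_fintype ι
  rw [Nat.card_eq_fintype_card]
  let S (s : ι → Prop) : Submodule ℂ V := span ℂ (Set.range fun i : {i // s i} => u i)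
  have hS_le (s : ι → Prop) : S s ≤ span ℂ (Set.range u) :=
    span_mono (Set.range_comp_subset_range _ u)
  have hS_rank (s : ι → Prop) : finrank ℂ (S s) = Fintype.card {i // s i} :=
    finrank_span_eq_card (hu.comp _ Subtype.val_injective)
  refine ⟨⟨S (0 < ε ·), hS_le _, (h.comp Subtype.val_injective).posDefOn_span fun i => i.2,
    hS_rank _⟩, ?_⟩
  rintro _ ⟨W, hWU, hW, rfl⟩
  have : FiniteDimensional ℂ (span ℂ (Set.range u)) :=
    .span_of_finite ℂ (Set.finite_range u)
  have : FiniteDimensional ℂ W := finiteDimensional_of_le hWU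
  have : FiniteDimensional ℂ (S (¬ 0 < ε ·)) := finiteDimensional_of_le (hS_le _)
  have hdisj : W ⊓ S (¬ 0 < ε ·) = ⊥ := by
    refine eq_bot_iff.mpr fun x hx => (mem_bot ℂ).mpr (by_contra fun hx0 => ?_)
    exact ((h.comp Subtype.val_injective).re_apply_self_nonpos (fun i => not_lt.mp i.2) hx.2).not_gt
      (hW x hx.1 hx0)
  have hdim := finrank_sup_add_finrank_inf_eq W (S (¬ 0 < ε ·))
  have hle := finrank_mono (sup_le hWU (hS_le (¬ 0 < ε ·)))
  rw [hdisj, finrank_bot, add_zero, hS_rank, Fintype.card_subtype_compl] at hdim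
  rw [finrank_span_eq_card hu] at hle
  have := Fintype.card_subtype_le (0 < ε ·)
  omega

lemma span_inf_perp (h : HasDiagGram ω ε u) :
    span ℂ (Set.range u) ⊓ perp ω (span ℂ (Set.range u)) =
      span ℂ (Set.range fun i : {i // ε i = 0} => u i) := by
  cases nonempty_fintype ι
  refine le_antisymm ?_ (span_le.mpr ?_)
  · rintro x ⟨hx, hperp⟩
    obtain ⟨d, rfl⟩ := (mem_span_range_iff_exists_fun ℂ).mp hx
    refine sum_mem fun i _ => ?_
    have hi := mem_perp_span_range.mp hperp i
    rw [h.apply_sum_left, mul_eq_zero, star_eq_zero, Complex.ofReal_eq_zero] at hi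
    rcases hi with hd | hε
    · simp [hd]
    · exact smul_mem _ _ (subset_span ⟨⟨i, hε⟩, rfl⟩)
  · rintro _ ⟨⟨i, hi⟩, rfl⟩
    exact ⟨subset_span ⟨i, rfl⟩, h.mem_perp_span_of_eq_zero hi⟩

theorem hasSignature (h : HasDiagGram ω ε u) (hu : LinearIndependent ℂ u) :
    HasSignature ω (span ℂ (Set.range u)) (Nat.card {i // 0 < ε i}) (Nat.card {i // ε i < 0})
      (Nat.card {i // ε i = 0}) := by
  cases nonempty_fintype ι
  refine ⟨h.isGreatest_finrank_posDefOn hu, ?_, ?_⟩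
  · simpa [negDefOn_iff_posDefOn_neg] using h.neg.isGreatest_finrank_posDefOn hu
  · rw [h.span_inf_perp, Nat.card_eq_fintype_card]
    exact finrank_span_eq_card (hu.comp _ Subtype.val_injective)

end HasDiagGram

lemma card_subtype_sum {A B : Type*} [Finite A] [Finite B] (s : A ⊕ B → Prop) :
    Nat.card {i // s i} = Nat.card {i // s (.inl i)} + Nat.card {i // s (.inr i)} := by
  rw [Nat.card_congr Equiv.subtypeSum, Nat.card_sum]

lemma IsSylvesterBasis.hasSignature {A B C : Type*} [Fintype A] [Fintype B] [Fintype C]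
    {U : Submodule ℂ V} {u : (A ⊕ B) ⊕ C → V} (h : IsSylvesterBasis ω U u) :
    HasSignature ω U (Fintype.card A) (Fintype.card B) (Fintype.card C) := by
  have hsig := h.hasDiagGram.hasSignature h.linearIndependent
  simp only [h.span_range, card_subtype_sum] at hsig
  simpa [pmSign, not_lt.mpr] using hsig

/-! ### Hyperbolic completion -/

lemma HasDiagGram.exists_completion [FiniteDimensional ℂ V] [Finite ι] (hω : IsHermitianForm ω)
    (hnd : IsNondeg ω) {ε : ι → ℝ} {u : ι → V} (h : HasDiagGram ω ε u) (hε : ∀ i, ε i ≠ 0) :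
    ∃ (a b : ℕ) (w : Fin a ⊕ Fin b → V), HasDiagGram ω (Sum.elim ε pmSign) (Sum.elim u w) ∧
      span ℂ (Set.range (Sum.elim u w)) = ⊤ := by
  obtain ⟨a, b, c, w, hw⟩ := hω.exists_isSylvesterBasis (perp ω (span ℂ (Set.range u)))
  have hperp (j) : w j ∈ perp ω (span ℂ (Set.range u)) :=
    hw.span_range ▸ subset_span (Set.mem_range_self j)
  have huw := h.sumElim hω hw.hasDiagGram fun i j =>
    hω.apply_eq_zero (mem_perp_span_range.mp (hperp j) i)
  have hspan : span ℂ (Set.range (Sum.elim u w)) = ⊤ := by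
    rw [Set.Sum.elim_range, span_union, hw.span_range, h.span_sup_perp hω hε]
  have : IsEmpty (Fin c) := ⟨fun k =>
    huw.ne_zero_of_span_eq_top hnd hspan (i := .inr (.inr k)) (hw.linearIndependent.ne_zero _) rfl⟩
  have hinl : Function.Surjective (Sum.inl : Fin a ⊕ Fin b → (Fin a ⊕ Fin b) ⊕ Fin c) :=
    (Equiv.sumEmpty _ _).symm.surjective
  refine ⟨a, b, w ∘ Sum.inl, ?_, ?_⟩
  · convert huw.comp (Function.Injective.sumMap Function.injective_id Sum.inl_injective) using 1 <;>
      simp [Sum.elim_comp_map]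
  · rw [Set.Sum.elim_range, hinl.range_comp, ← Set.Sum.elim_range, hspan]

lemma exists_apply_eq_of_linearIndependent [Finite ι] (hnd : IsNondeg ω)
    {u : ι → V} (hu : LinearIndependent ℂ u) (d : ι → ℂ) : ∃ x, ∀ i, ω (u i) x = d i := by
  classical
  cases nonempty_fintype ι
  suffices Function.Injective (LinearMap.pi fun i => ω (u i)).dualMap by
    obtain ⟨x, hx⟩ := LinearMap.dualMap_injective_iff.mp this d
    exact ⟨x, congrFun hx⟩
  refine (injective_iff_map_eq_zero _).mpr fun g hg => ?_
  have hsum : ∑ i, star (g fun j => if i = j then 1 else 0) • u i = 0 := hnd _ fun x => by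
    have hgx : g (fun i => ω (u i) x) = 0 := LinearMap.congr_fun hg x
    rw [LinearMap.pi_apply_eq_sum_univ g] at hgx
    simpa [mul_comm] using hgx
  have hcoeff := Fintype.linearIndependent_iff.mp hu _ hsum
  refine LinearMap.ext fun d => (LinearMap.pi_apply_eq_sum_univ g d).trans ?_
  exact Finset.sum_eq_zero fun i _ => by rw [star_eq_zero.mp (hcoeff i), smul_zero]

section Hyperbolic

variable {S C : Type*}

open Classical in
lemma exists_hyperbolic_partners [Finite S] [Finite C]
    (hω : IsHermitianForm ω) (hnd : IsNondeg ω) {u : S ⊕ C → V} (hu : LinearIndependent ℂ u)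
    (hnull : ∀ i k, ω (u i) (u (.inr k)) = 0) :
    ∃ z : C → V, (∀ i k, ω (u i) (z k) = if i = .inr k then 1 else 0) ∧
      ∀ j k, ω (z j) (z k) = 0 := by
  cases nonempty_fintype C
  choose y hy using fun k : C =>
    exists_apply_eq_of_linearIndependent hnd hu fun i => if i = .inr k then 1 else 0
  have hy' (j k) : ω (y j) (u (.inr k)) = if k = j then 1 else 0 := by
    rw [hω, hy]
    split_ifs <;> simp_all
  let z (k : C) : V := y k - ∑ j, (ω (y j) (y k) / 2) • u (.inr j)
  have hz (x : V) (k : C) : ω x (z k) =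
      ω x (y k) - ∑ j, ω (y j) (y k) / 2 * ω x (u (.inr j)) := by
    simp [z]
  have huz (i) (k : C) : ω (u i) (z k) = if i = .inr k then 1 else 0 := by
    simp [hz, hnull, hy]
  refine ⟨z, huz, fun j k => ?_⟩
  have hzu (j k) : ω (z j) (u (.inr k)) = if k = j then 1 else 0 := by
    rw [hω, huz]
    split_ifs <;> simp_all
  have hzy : ω (z j) (y k) = ω (y j) (y k) / 2 := by
    rw [hω, hz]
    simp only [hω (y k) (y j), RCLike.star_def, hy', mul_ite, mul_one, mul_zero,
      Finset.sum_ite_eq', Finset.mem_univ, ↓reduceIte, star_sub, RingHomCompTriple.comp_apply,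
      RingHom.id_apply, star_div₀, star_ofNat]
    ring
  simp [hz, hzu, hzy]

/-- The family obtained by adding up the two vectors of each pair indexed by `C`. If `v` is an
orthogonal basis of signs `1` and `-1` on the two copies of `C`, then the sums are isotropic. -/
def foldHyperbolic (v : S ⊕ (C ⊕ C) → V) : S ⊕ C → V :=
  Sum.elim (fun i => v (.inl i)) fun k => v (.inr (.inl k)) + v (.inr (.inr k))

lemma linearIndependent_foldHyperbolic [Finite S] [Finite C] {v : S ⊕ (C ⊕ C) → V}
    (hv : LinearIndependent ℂ v) : LinearIndependent ℂ (foldHyperbolic v) := by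
  cases nonempty_fintype S
  cases nonempty_fintype C
  refine Fintype.linearIndependent_iff.mpr fun g hg => ?_
  have hg0 := Fintype.linearIndependent_iff.mp hv
    (Sum.elim (g ∘ .inl) (Sum.elim (g ∘ .inr) (g ∘ .inr)))
    (by simpa [foldHyperbolic, Finset.sum_add_distrib] using hg)
  exact Sum.rec (fun i => hg0 (.inl i)) fun k => hg0 (.inr (.inl k))

lemma HasDiagGram.hasDiagGram_foldHyperbolic (hω : IsHermitianForm ω) {ε : S → ℝ}
    {v : S ⊕ (C ⊕ C) → V} (h : HasDiagGram ω (Sum.elim ε pmSign) v) :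
    HasDiagGram ω (Sum.elim ε 0) (foldHyperbolic v) := by
  have hortho {i j} (hij : i ≠ j) : ω (v i) (v j) = 0 := h.ortho hij
  refine (h.comp Sum.inl_injective).sumElim hω ⟨fun k => ?_, fun j k hjk => ?_⟩ fun i k => ?_
  · simp [h.self, hortho, pmSign]
  · simp [hortho, hjk]
  · simp [hortho]

open Classical in
lemma hasDiagGram_of_hyperbolic {r z : C → V} (hω : IsHermitianForm ω)
    (hr : ∀ j k, ω (r j) (r k) = 0) (hrz : ∀ j k, ω (r j) (z k) = if j = k then 1 else 0)
    (hz : ∀ j k, ω (z j) (z k) = 0) :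
    HasDiagGram ω pmSign
      (Sum.elim (fun k => (2⁻¹ : ℂ) • r k + z k) fun k => (2⁻¹ : ℂ) • r k - z k) := by
  have hzr (j k) : ω (z j) (r k) = if j = k then 1 else 0 := by
    rw [hω, hrz]
    split_ifs <;> simp_all
  refine .sumElim hω ⟨fun k => ?_, fun j k hjk => ?_⟩ ⟨fun k => ?_, fun j k hjk => ?_⟩ fun j k => ?_
  · norm_num [hr, hrz, hzr, hz, Complex.conj_ofNat]
  · simp [hr, hrz, hzr, hz, hjk]
  · norm_num [hr, hrz, hzr, hz, Complex.conj_ofNat]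
  · simp [hr, hrz, hzr, hz, hjk]
  · simp [hr, hrz, hzr, hz, Complex.conj_ofNat]

/-- The isotropic vectors of `u` are completed to hyperbolic pairs, which are then rotated into
pairs of opposite signs. -/
lemma HasDiagGram.exists_foldHyperbolic_eq [Finite S] [Finite C] (hω : IsHermitianForm ω)
    (hnd : IsNondeg ω) {ε : S → ℝ} {u : S ⊕ C → V} (h : HasDiagGram ω (Sum.elim ε 0) u)
    (hu : LinearIndependent ℂ u) :
    ∃ v : S ⊕ (C ⊕ C) → V, HasDiagGram ω (Sum.elim ε pmSign) v ∧ foldHyperbolic v = u := by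
  classical
  have hnull (i) (k : C) : ω (u i) (u (.inr k)) = 0 := by
    obtain rfl | hik := eq_or_ne i (.inr k)
    · simp [h.self]
    · exact h.ortho hik
  obtain ⟨z, huz, hz⟩ := exists_hyperbolic_partners hω hnd hu hnull
  have hpair := hasDiagGram_of_hyperbolic hω (fun _ => hnull _) (by simp [huz]) hz
  refine ⟨_, (h.comp Sum.inl_injective).sumElim hω hpair ?_, funext ?_⟩
  · rintro i (k | k) <;> simp [hnull, huz]
  · rintro (i | k)
    · rfl
    · simp only [foldHyperbolic, Sum.elim_inl, Sum.elim_inr]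
      module

end Hyperbolic

/-! ### Witt's theorem -/

/-- The signature `(a, b, c)` of the restriction of `ω` to `U` as a function of `U`: the triple
with `HasSignature ω U a b c`. -/
def signature (ω : V →ₗ⋆[ℂ] V →ₗ[ℂ] ℂ) (U : Submodule ℂ V) : ℕ × ℕ × ℕ :=
  (sSup {d | ∃ W ≤ U, PosDefOn ω W ∧ finrank ℂ W = d},
    sSup {d | ∃ W ≤ U, NegDefOn ω W ∧ finrank ℂ W = d},
    finrank ℂ (U ⊓ perp ω U : Submodule ℂ V))

lemma HasSignature.signature_eq {U : Submodule ℂ V} {a b c : ℕ} (h : HasSignature ω U a b c) :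
    signature ω U = (a, b, c) :=
  Prod.ext h.1.csSup_eq (Prod.ext h.2.1.csSup_eq h.2.2)

lemma HasDiagGram.exists_isometry [Finite ι] {ε : ι → ℝ} {v w : ι → V} (hε : ∀ i, ε i ≠ 0)
    (hv : HasDiagGram ω ε v) (hw : HasDiagGram ω ε w) (hv_top : span ℂ (Set.range v) = ⊤)
    (hw_top : span ℂ (Set.range w) = ⊤) :
    ∃ φ : V ≃ₗ[ℂ] V, (∀ x y, ω (φ x) (φ y) = ω x y) ∧ φ ∘ v = w := by
  cases nonempty_fintype ι
  let b := Basis.mk (hv.linearIndependent hε) hv_top.ge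
  let b' := Basis.mk (hw.linearIndependent hε) hw_top.ge
  let φ := b.equiv b' (Equiv.refl ι)
  have hφv (i) : φ (v i) = w i := by
    simpa [b, b'] using b.equiv_apply i b' (Equiv.refl ι)
  refine ⟨φ, fun x y => ?_, funext hφv⟩
  obtain ⟨c, rfl⟩ := (mem_span_range_iff_exists_fun ℂ).mp (hv_top ▸ mem_top (x := x))
  obtain ⟨d, rfl⟩ := (mem_span_range_iff_exists_fun ℂ).mp (hv_top ▸ mem_top (x := y))
  simp only [map_sum φ, map_smul φ, hφv, hv.apply_sum_sum, hw.apply_sum_sum]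

lemma HasDiagGram.signature_top [Finite ι] {ε : ι → ℝ} {v : ι → V} (hv : HasDiagGram ω ε v)
    (hε : ∀ i, ε i ≠ 0) (hv_top : span ℂ (Set.range v) = ⊤) :
    signature ω ⊤ = (Nat.card {i // 0 < ε i}, Nat.card {i // ε i < 0}, 0) := by
  rw [← hv_top, (hv.hasSignature (hv.linearIndependent hε)).signature_eq]
  simp [hε]

section Witt

variable [FiniteDimensional ℂ V] {S C : Type*} [Finite S] [Finite C] {ε : S → ℝ}

lemma HasDiagGram.exists_isometry_of_ne_zero (hω : IsHermitianForm ω) (hnd : IsNondeg ω)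
    (hε : ∀ i, ε i ≠ 0) {v v' : S → V} (hv : HasDiagGram ω ε v) (hv' : HasDiagGram ω ε v') :
    ∃ φ : V ≃ₗ[ℂ] V, (∀ x y, ω (φ x) (φ y) = ω x y) ∧ φ ∘ v = v' := by
  obtain ⟨a, b, w, hw, hw_top⟩ := hv.exists_completion hω hnd hε
  obtain ⟨a', b', w', hw', hw_top'⟩ := hv'.exists_completion hω hnd hε
  have hsig := (hw.signature_top (Sum.rec hε pmSign_ne_zero) hw_top).symm.trans
    (hw'.signature_top (Sum.rec hε pmSign_ne_zero) hw_top')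
  simp only [card_subtype_sum, Sum.elim_inl, Sum.elim_inr, Prod.mk.injEq, add_right_inj] at hsig
  obtain ⟨rfl, rfl⟩ : a = a' ∧ b = b' := by simpa [pmSign, not_lt.mpr] using hsig
  obtain ⟨φ, hφ, hφw⟩ := hw.exists_isometry (Sum.rec hε pmSign_ne_zero) hw' hw_top hw_top'
  exact ⟨φ, hφ, funext fun i => congrFun hφw (.inl i)⟩

theorem HasDiagGram.exists_isometry_of_linearIndependent (hω : IsHermitianForm ω)
    (hnd : IsNondeg ω) (hε : ∀ i, ε i ≠ 0) {u u' : S ⊕ C → V}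
    (hu : HasDiagGram ω (Sum.elim ε 0) u) (hu' : HasDiagGram ω (Sum.elim ε 0) u')
    (hli : LinearIndependent ℂ u) (hli' : LinearIndependent ℂ u') :
    ∃ φ : V ≃ₗ[ℂ] V, (∀ x y, ω (φ x) (φ y) = ω x y) ∧ φ ∘ u = u' := by
  obtain ⟨v, hv, rfl⟩ := hu.exists_foldHyperbolic_eq hω hnd hli
  obtain ⟨v', hv', rfl⟩ := hu'.exists_foldHyperbolic_eq hω hnd hli'
  obtain ⟨φ, hφ, rfl⟩ :=
    hv.exists_isometry_of_ne_zero hω hnd (Sum.rec hε pmSign_ne_zero) hv'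
  refine ⟨φ, hφ, funext ?_⟩
  rintro (i | k) <;> simp [foldHyperbolic]

end Witt

/-! ### Special isometries -/

open Matrix in
lemma IsHermitianForm.norm_det_eq_one [FiniteDimensional ℂ V] (hω : IsHermitianForm ω)
    (hnd : IsNondeg ω) {φ : V →ₗ[ℂ] V} (hφ : ∀ x y, ω (φ x) (φ y) = ω x y) :
    ‖LinearMap.det φ‖ = 1 := by
  obtain ⟨ε, b, hb⟩ := hω.exists_basis_hasDiagGram
  have hε (i) : (ε i : ℂ) ≠ 0 := mod_cast hb.ne_zero_of_span_eq_top hnd b.span_eq (b.ne_zero i)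
  let M := LinearMap.toMatrix b b φ
  let D : Matrix _ _ ℂ := diagonal fun i => (ε i : ℂ)
  have hφb (j) : φ (b j) = ∑ i, M i j • b i := by
    simp only [M, LinearMap.toMatrix_apply, b.sum_repr]
  have hunitary : Mᴴ * (D * M) = D := by
    ext i j
    calc (Mᴴ * (D * M)) i j = ω (φ (b i)) (φ (b j)) := by
          rw [hφb, hφb, hb.apply_sum_sum]
          simp only [mul_apply (M := Mᴴ), D, diagonal_mul, conjTranspose_apply]
      _ = D i j := by
          rw [hφ]
          obtain rfl | hij := eq_or_ne i j
          · simp [D, hb.self]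
          · simp [D, hij, hb.ortho hij]
  have hD : D.det ≠ 0 := by
    rw [det_diagonal]
    exact Finset.prod_ne_zero_iff.mpr fun i _ => hε i
  have hdet : star (LinearMap.det φ) * LinearMap.det φ = 1 := by
    have := congrArg det hunitary
    rw [det_mul, det_mul, det_conjTranspose, LinearMap.det_toMatrix] at this
    exact mul_right_cancel₀ hD (by linear_combination this)
  rw [Complex.star_def, Complex.conj_mul'] at hdet
  exact (pow_eq_one_iff_of_nonneg (norm_nonneg _) two_ne_zero).mp (mod_cast hdet)

/-- An isometry can be divided by an `n`-th root of its determinant, a scalar of norm one. -/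
lemma IsHermitianForm.exists_isometry_det_eq_one [FiniteDimensional ℂ V] (hω : IsHermitianForm ω)
    (hnd : IsNondeg ω) {φ : V ≃ₗ[ℂ] V} (hφ : ∀ x y, ω (φ x) (φ y) = ω x y) :
    ∃ ψ : V ≃ₗ[ℂ] V, (∀ x y, ω (ψ x) (ψ y) = ω x y) ∧ LinearMap.det (ψ : V →ₗ[ℂ] V) = 1 ∧
      ∀ U : Submodule ℂ V, U.map (ψ : V →ₗ[ℂ] V) = U.map (φ : V →ₗ[ℂ] V) := by
  obtain h0 | hpos := Nat.eq_zero_or_pos (finrank ℂ V)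
  · exact ⟨φ, hφ, LinearMap.det_eq_one_of_finrank_eq_zero h0 _, fun _ => rfl⟩
  have hdet : ‖LinearMap.det (φ : V →ₗ[ℂ] V)‖ = 1 := hω.norm_det_eq_one hnd hφ
  obtain ⟨μ, hμ⟩ := IsAlgClosed.exists_pow_nat_eq (LinearMap.det (φ : V →ₗ[ℂ] V))⁻¹ hpos
  have hμ_norm : ‖μ‖ = 1 := by
    refine (pow_eq_one_iff_of_nonneg (norm_nonneg _) hpos.ne').mp ?_
    rw [← norm_pow, hμ, norm_inv, hdet, inv_one]
  have hμ0 : μ ≠ 0 := norm_ne_zero_iff.mp (by simp [hμ_norm])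
  let ψ : V ≃ₗ[ℂ] V := φ.trans (LinearEquiv.smulOfNeZero ℂ V μ hμ0)
  have hψ : (ψ : V →ₗ[ℂ] V) = μ • (φ : V →ₗ[ℂ] V) := rfl
  refine ⟨ψ, fun x y => ?_, ?_, fun U => by rw [hψ, Submodule.map_smul _ _ _ hμ0]⟩
  · calc ω (μ • φ x) (μ • φ y) = star μ * μ * ω (φ x) (φ y) := by simp [mul_assoc, mul_left_comm]
      _ = ω x y := by simp [Complex.conj_mul', hμ_norm, hφ]
  · rw [hψ, LinearMap.det_smul, hμ, inv_mul_cancel₀ (norm_ne_zero_iff.mp (by simp [hdet]))]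

/-! ### Orbits and signatures -/

lemma IsSylvesterBasis.map {A B C : Type*} {U : Submodule ℂ V} {u : (A ⊕ B) ⊕ C → V}
    (h : IsSylvesterBasis ω U u) {φ : V ≃ₗ[ℂ] V} (hφ : ∀ x y, ω (φ x) (φ y) = ω x y) :
    IsSylvesterBasis ω (U.map (φ : V →ₗ[ℂ] V)) (φ ∘ u) where
  hasDiagGram := ⟨fun i => (hφ _ _).trans (h.hasDiagGram.self i),
    fun _ _ hij => (hφ _ _).trans (h.hasDiagGram.ortho hij)⟩
  linearIndependent := h.linearIndependent.map' (φ : V →ₗ[ℂ] V) φ.ker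
  span_range := by rw [← h.span_range, map_span, Set.range_comp]; rfl

lemma IsSylvesterBasis.finrank_eq {A B C : Type*} [Fintype A] [Fintype B] [Fintype C]
    {U : Submodule ℂ V} {u : (A ⊕ B) ⊕ C → V} (h : IsSylvesterBasis ω U u) :
    finrank ℂ U = Fintype.card A + Fintype.card B + Fintype.card C := by
  rw [← h.span_range, finrank_span_eq_card h.linearIndependent, Fintype.card_sum, Fintype.card_sum]

/-- The signatures of the `k`-dimensional subspaces of a space of signature `(p, q)`. -/
def admissibleSignatures (p q k : ℕ) : Set (ℕ × ℕ × ℕ) :=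
  {x | x.1 + x.2.2 ≤ p ∧ x.2.1 + x.2.2 ≤ q ∧ x.1 + x.2.1 + x.2.2 = k}

section Orbits

variable [FiniteDimensional ℂ V] {k p q : ℕ}

theorem sameSUOrbit_iff (hω : IsHermitianForm ω) (hnd : IsNondeg ω)
    {U U' : {U : Submodule ℂ V // finrank ℂ U = k}} :
    SameSUOrbit ω k U U' ↔ signature ω U.1 = signature ω U'.1 := by
  obtain ⟨a, b, c, u, hu⟩ := hω.exists_isSylvesterBasis U.1
  obtain ⟨a', b', c', u', hu'⟩ := hω.exists_isSylvesterBasis U'.1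
  constructor
  · rintro ⟨φ, hφ, -, hφU⟩
    rw [← hφU, hu.hasSignature.signature_eq, (hu.map hφ).hasSignature.signature_eq]
  · intro hsig
    rw [hu.hasSignature.signature_eq, hu'.hasSignature.signature_eq] at hsig
    simp only [Fintype.card_fin, Prod.mk.injEq] at hsig
    obtain ⟨rfl, rfl, rfl⟩ := hsig
    obtain ⟨φ, hφ, hφu⟩ := hu.hasDiagGram.exists_isometry_of_linearIndependent hω hnd
      pmSign_ne_zero hu'.hasDiagGram hu.linearIndependent hu'.linearIndependent
    obtain ⟨ψ, hψ, hdet, hmap⟩ := hω.exists_isometry_det_eq_one hnd hφ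
    refine ⟨ψ, hψ, hdet, ?_⟩
    rw [hmap, ← (hu.map hφ).span_range, hφu, hu'.span_range]

lemma signature_mem_admissibleSignatures (hω : IsHermitianForm ω) (hnd : IsNondeg ω)
    (htop : HasSignature ω ⊤ p q 0) (U : Submodule ℂ V) :
    signature ω U ∈ admissibleSignatures p q (finrank ℂ U) := by
  obtain ⟨a, b, c, u, hu⟩ := hω.exists_isSylvesterBasis U
  obtain ⟨v, hv, -⟩ := hu.hasDiagGram.exists_foldHyperbolic_eq hω hnd hu.linearIndependent
  have hne : ∀ i, Sum.elim (pmSign : Fin a ⊕ Fin b → ℝ) (pmSign : Fin c ⊕ Fin c → ℝ) i ≠ 0 :=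
    Sum.rec pmSign_ne_zero pmSign_ne_zero
  obtain ⟨a', b', w, hw, hw_top⟩ := hv.exists_completion hω hnd hne
  have hpq := htop.signature_eq.symm.trans
    (hw.signature_top (Sum.rec hne pmSign_ne_zero) hw_top)
  simp only [card_subtype_sum] at hpq
  obtain ⟨rfl, rfl⟩ : p = a + c + a' ∧ q = b + c + b' := by
    simpa [pmSign, not_lt.mpr] using hpq
  simp [admissibleSignatures, hu.hasSignature.signature_eq, hu.finrank_eq]

lemma exists_signature_eq (hω : IsHermitianForm ω) (htop : HasSignature ω ⊤ p q 0)
    {x : ℕ × ℕ × ℕ} (hx : x ∈ admissibleSignatures p q k) :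
    ∃ U : Submodule ℂ V, finrank ℂ U = k ∧ signature ω U = x := by
  obtain ⟨a, b, c⟩ := x
  obtain ⟨hp, hq, rfl⟩ : a + c ≤ p ∧ b + c ≤ q ∧ a + b + c = k := hx
  obtain ⟨p', q', n₀, e, he⟩ := hω.exists_isSylvesterBasis (⊤ : Submodule ℂ V)
  obtain ⟨rfl, rfl, rfl⟩ : p' = p ∧ q' = q ∧ n₀ = 0 := by
    simpa using he.hasSignature.signature_eq.symm.trans htop.signature_eq
  let r : (Fin a ⊕ Fin b) ⊕ (Fin c ⊕ Fin c) → (Fin p' ⊕ Fin q') ⊕ Fin 0 :=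
    Sum.inl ∘ Sum.map (Fin.castLE hp ∘ finSumFinEquiv) (Fin.castLE hq ∘ finSumFinEquiv) ∘
      Equiv.sumSumSumComm _ _ _ _
  have hr : Function.Injective r := Sum.inl_injective.comp <|
    (((Fin.castLE_injective hp).comp (Equiv.injective _)).sumMap
      ((Fin.castLE_injective hq).comp (Equiv.injective _))).comp (Equiv.injective _)
  have hsign : Sum.elim pmSign 0 ∘ r = Sum.elim pmSign pmSign := by
    funext i
    rcases i with (i | i) | (i | i) <;> rfl
  have hu : IsSylvesterBasis ω _ (foldHyperbolic (e ∘ r)) :=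
    ⟨(hsign ▸ he.hasDiagGram.comp hr).hasDiagGram_foldHyperbolic hω,
      linearIndependent_foldHyperbolic (he.linearIndependent.comp r hr), rfl⟩
  exact ⟨_, by simpa using hu.finrank_eq, by simpa using hu.hasSignature.signature_eq⟩

theorem card_quot_sameSUOrbit (hω : IsHermitianForm ω) (hnd : IsNondeg ω)
    (htop : HasSignature ω ⊤ p q 0) (k : ℕ) :
    Nat.card (Quot (SameSUOrbit ω k (V := V))) = (admissibleSignatures p q k).ncard := by
  let sig : Quot (SameSUOrbit ω k (V := V)) → ℕ × ℕ × ℕ :=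
    Quot.lift (fun U => signature ω U.1) fun _ _ => (sameSUOrbit_iff hω hnd).mp
  have hsig_inj : Function.Injective sig := by
    rintro ⟨U⟩ ⟨U'⟩ h
    exact Quot.sound ((sameSUOrbit_iff hω hnd).mpr h)
  have hsig_range : Set.range sig = admissibleSignatures p q k := by
    ext x
    constructor
    · rintro ⟨⟨U, rfl⟩, rfl⟩
      exact signature_mem_admissibleSignatures hω hnd htop U
    · intro hx
      obtain ⟨U, hU, rfl⟩ := exists_signature_eq hω htop hx
      exact ⟨Quot.mk _ ⟨U, hU⟩, rfl⟩
  rw [← hsig_range, ← Nat.card_coe_set_eq, Nat.card_range_of_injective hsig_inj]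

end Orbits

/-- With `r = m - c`, the pairs `(a - (k - q), b - (k - p))` run over the antidiagonal of `r`, for
each `r ≤ m`. -/
lemma ncard_admissibleSignatures {p q k m : ℕ} (hm : m + (k - p) + (k - q) = k) :
    (admissibleSignatures p q k).ncard = (m + 1) * (m + 2) / 2 := by
  let T := (Finset.range (m + 1)).sigma fun r => Finset.HasAntidiagonal.antidiagonal r
  let f : (Σ _ : ℕ, ℕ × ℕ) → ℕ × ℕ × ℕ := fun ⟨r, i, j⟩ => (i + (k - q), j + (k - p), m - r)
  have hT {r i j} : ⟨r, i, j⟩ ∈ T ↔ r ≤ m ∧ i + j = r := by simp [T]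
  have hf_inj : Set.InjOn f T := by
    rintro ⟨r, i, j⟩ hy ⟨r', i', j'⟩ hy' h
    obtain ⟨-, rfl⟩ := hT.mp hy
    obtain ⟨-, rfl⟩ := hT.mp hy'
    obtain ⟨hi, hj, -⟩ : i = i' ∧ j = j' ∧ _ := by simpa [f] using h
    rw [hi, hj]
  have hf_image : f '' T = admissibleSignatures p q k := by
    ext ⟨a, b, c⟩
    constructor
    · rintro ⟨⟨r, i, j⟩, hy, h⟩
      have := hT.mp hy
      simp only [f, Prod.mk.injEq] at h
      simp only [admissibleSignatures, Set.mem_ofPred_eq]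
      omega
    · rintro ⟨hp, hq, hk⟩
      refine ⟨⟨m - c, a - (k - q), b - (k - p)⟩, hT.mpr ?_, ?_⟩ <;>
        simp only [f, Prod.mk.injEq] at * <;> omega
  calc (admissibleSignatures p q k).ncard = T.card := by
        rw [← hf_image, hf_inj.ncard_image, Set.ncard_coe_finset]
    _ = ∑ r ∈ Finset.range (m + 1), (r + 1) := by simp [T, Finset.card_sigma]
    _ = ∑ r ∈ Finset.range (m + 2), r := by simp [Finset.sum_range_succ' _ (m + 1)]
    _ = (m + 1) * (m + 2) / 2 := by rw [Finset.sum_range_id, mul_comm]; rfl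

theorem card_SU_orbits_grassmannian
    [FiniteDimensional ℂ V] (n p k l : ℕ) (hn : finrank ℂ V = n) (hpn : p ≤ n) (hk : k ≤ n)
    (hl : l = min p (n - p))
    (ω : V →ₗ⋆[ℂ] V →ₗ[ℂ] ℂ) (hherm : IsHermitianForm ω) (hnd : IsNondeg ω)
    (hsig : HasSignature ω ⊤ p (n - p) 0) :
    (n - l ≤ k → Nat.card (Quot (SameSUOrbit ω k (V := V))) = (n - k + 1) * (n - k + 2) / 2) ∧
    (l ≤ k → k ≤ n - l → Nat.card (Quot (SameSUOrbit ω k (V := V))) = (l + 1) * (l + 2) / 2) ∧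
    (k ≤ l → Nat.card (Quot (SameSUOrbit ω k (V := V))) = (k + 1) * (k + 2) / 2) := by
  rw [card_quot_sameSUOrbit hherm hnd hsig]
  exact ⟨fun _ => ncard_admissibleSignatures (by omega),
    fun _ _ => ncard_admissibleSignatures (by omega),
    fun _ => ncard_admissibleSignatures (by omega)⟩
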